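/- arXiv:1510.05179 — 2 statements merged into one kernel-verified Lean document; each statement's English description precedes it below -/
import Mathlib

section
/- Suppose (V, ⊕, ⊗) satisfies criteria (C1), (C2) and (C3). Then for every finite edge set K, all key sets K₁, K₂, all arrays E_out : K × K₁ → V and E_in : K × K₂ → V, and all x ∈ K₁, y ∈ K₂, the product entry ⊕_{k∈K} E_out(k,x) ⊗ E_in(k,y) is nonzero if and only if there exists k ∈ K with E_out(k,x) ≠ 0 and E_in(k,y) ≠ 0. (In graph terms: if E_out and E_in are the source and target incidence arrays of a weighted directed graph, then E_outᵀ E_in is an adjacency array of the graph.) -/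
theorem subsingleton_addUnits_of_add_ne_zero {M : Type*} [AddMonoid M]
    (add_ne_zero : ∀ v w : M, v ≠ 0 → w ≠ 0 → v + w ≠ 0) : Subsingleton (AddUnits M) := by
  refine .addUnits_of_isAddUnit fun v hv ↦ ?_
  obtain ⟨w, hvw⟩ := hv.exists_neg
  by_contra hv0
  have hw0 : w ≠ 0 := by
    rintro rfl
    exact hv0 (by rwa [add_zero] at hvw)
  exact add_ne_zero v w hv0 hw0 hvw

section BinaryOperation

variable {A B V : Type*} [Zero A] [Zero B]

theorem binop_ne_zero_iff [Zero V] {mul : A → B → V}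
    (mul_ne_zero : ∀ a b, a ≠ 0 → b ≠ 0 → mul a b ≠ 0)
    (mul_zero : ∀ a, mul a 0 = 0) (zero_mul : ∀ b, mul 0 b = 0) {a : A} {b : B} :
    mul a b ≠ 0 ↔ a ≠ 0 ∧ b ≠ 0 where
  mp h := ⟨fun ha ↦ h (ha ▸ zero_mul b), fun hb ↦ h (hb ▸ mul_zero a)⟩
  mpr h := mul_ne_zero a b h.1 h.2

theorem stmt0_general [AddCommMonoid V] {mul : A → B → V}
    (add_ne_zero : ∀ v w : V, v ≠ 0 → w ≠ 0 → v + w ≠ 0)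
    (mul_ne_zero : ∀ a b, a ≠ 0 → b ≠ 0 → mul a b ≠ 0)
    (mul_zero : ∀ a, mul a 0 = 0) (zero_mul : ∀ b, mul 0 b = 0)
    {K : Type*} (s : Finset K) (f : K → A) (g : K → B) :
    ∑ k ∈ s, mul (f k) (g k) ≠ 0 ↔ ∃ k ∈ s, f k ≠ 0 ∧ g k ≠ 0 := by
  have := subsingleton_addUnits_of_add_ne_zero add_ne_zero
  calc ∑ k ∈ s, mul (f k) (g k) ≠ 0
    _ ↔ ∃ k ∈ s, mul (f k) (g k) ≠ 0 := by
      simp only [ne_eq, Finset.sum_eq_zero_iff, not_forall, exists_prop]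
    _ ↔ ∃ k ∈ s, f k ≠ 0 ∧ g k ≠ 0 := by
      simp only [binop_ne_zero_iff mul_ne_zero mul_zero zero_mul]

end BinaryOperation

/-- If (V, ⊕, ⊗) satisfies (C1) no nontrivial additive inverses,
(C2) the zero-product property, and (C3) zero annihilates, then for every finite
edge set `K`, key sets `K₁ K₂`, incidence arrays `Eout : K × K₁ → V` and
`Ein : K × K₂ → V`, and all `x ∈ K₁`, `y ∈ K₂`, the product entry
`⊕_{k∈K} Eout(k,x) ⊗ Ein(k,y)` is nonzero iff some `k` has
`Eout(k,x) ≠ 0` and `Ein(k,y) ≠ 0` (i.e. `Eoutᵀ Ein` is an adjacency array). -/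
theorem stmt0 (V : Type*) [AddCommMonoid V]
    (mul : V → V → V) (one : V)
    (hone : ∀ v : V, mul v one = v ∧ mul one v = v)
    (C1 : ∀ v w : V, v ≠ 0 → w ≠ 0 → v + w ≠ 0)
    (C2 : ∀ a b : V, a ≠ 0 → b ≠ 0 → mul a b ≠ 0)
    (C3 : ∀ v : V, mul v 0 = 0 ∧ mul 0 v = 0) :
    ∀ (K : Type) [Fintype K] (K₁ K₂ : Type)
      (Eout : K × K₁ → V) (Ein : K × K₂ → V) (x : K₁) (y : K₂),
      (∑ k : K, mul (Eout (k, x)) (Ein (k, y))) ≠ 0 ↔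
        ∃ k : K, Eout (k, x) ≠ 0 ∧ Ein (k, y) ≠ 0 := by
  intro K _ K₁ K₂ Eout Ein x y
  simpa only [Finset.mem_univ, true_and] using stmt0_general C1 C2 (fun v ↦ (C3 v).1)
    (fun v ↦ (C3 v).2) Finset.univ (fun k ↦ Eout (k, x)) (fun k ↦ Ein (k, y))
end

section
/- Suppose that for every finite edge set K, all key sets K₁, K₂, all arrays E_out : K × K₁ → V and E_in : K × K₂ → V, and all x ∈ K₁, y ∈ K₂, the entry ⊕_{k∈K} E_out(k,x) ⊗ E_in(k,y) is nonzero if and only if there exists k ∈ K with E_out(k,x) ≠ 0 and E_in(k,y) ≠ 0. Then (V, ⊕, ⊗) satisfies all three criteria: (C1) no nontrivial additive inverses (v ≠ 0 and w ≠ 0 imply v ⊕ w ≠ 0), (C2) the zero-product property (a ≠ 0 and b ≠ 0 imply a ⊗ b ≠ 0), and (C3) zero annihilates (v ⊗ 0 = 0 ⊗ v = 0 for all v ∈ V). -/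
/-!
Two edges suffice. Comparing `0 ⊗ 1 ⊕ 0 ⊗ 0 = 0` with `0 ⊗ 1 = 0` gives `0 ⊗ 0 = 0`, so a second
edge carrying the values `0`, `0` contributes nothing, and the criterion for the other edge alone
says that `a ⊗ b` vanishes exactly when `a` or `b` does. For additive inverses, give both edges the
in-value `1`: the entry is then `v ⊗ 1 ⊕ w ⊗ 1 = v ⊕ w`.
-/

section AddZeroClass

variable {V : Type*} [AddZeroClass V] {mul : V → V → V} {one : V}

/-- The nonvanishing criterion for array products whose edge set has two elements, one with
out- and in-values `a`, `b` and the other with `c`, `d`. The keys are fixed, so they do not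
appear. -/
def DetectsTwoEdges (mul : V → V → V) : Prop :=
  ∀ a b c d : V, mul a b + mul c d ≠ 0 ↔ (a ≠ 0 ∧ b ≠ 0) ∨ (c ≠ 0 ∧ d ≠ 0)

namespace DetectsTwoEdges

theorem zero_mul_zero (h : DetectsTwoEdges mul) (hone : ∀ v, mul v one = v) :
    mul 0 0 = 0 := by
  have entry_eq_zero : mul 0 one + mul 0 0 = 0 := by simpa using h 0 one 0 0
  rwa [hone, zero_add] at entry_eq_zero

theorem mul_ne_zero_iff (h : DetectsTwoEdges mul) (hone : ∀ v, mul v one = v) (a b : V) :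
    mul a b ≠ 0 ↔ a ≠ 0 ∧ b ≠ 0 := by
  simpa [h.zero_mul_zero hone] using h a b 0 0

theorem mul_eq_zero_iff (h : DetectsTwoEdges mul) (hone : ∀ v, mul v one = v) (a b : V) :
    mul a b = 0 ↔ a = 0 ∨ b = 0 := by
  simpa only [ne_eq, ← not_or, not_iff_not] using h.mul_ne_zero_iff hone a b

theorem add_ne_zero (h : DetectsTwoEdges mul) (hone : ∀ v, mul v one = v) {v : V} (hv : v ≠ 0)
    (w : V) : v + w ≠ 0 := by
  have one_ne_zero : one ≠ 0 := ((h.mul_ne_zero_iff hone v one).1 (by rwa [hone])).2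
  have entry_ne_zero : mul v one + mul w one ≠ 0 := (h v one w one).2 (.inl ⟨hv, one_ne_zero⟩)
  rwa [hone, hone] at entry_ne_zero

end DetectsTwoEdges

end AddZeroClass

theorem stmt6_general {V : Type*} [AddZeroClass V] {mul : V → V → V} {one : V}
    (h : DetectsTwoEdges mul) (hone : ∀ v, mul v one = v) :
    (∀ v w : V, v ≠ 0 → w ≠ 0 → v + w ≠ 0) ∧
    (∀ a b : V, a ≠ 0 → b ≠ 0 → mul a b ≠ 0) ∧
    (∀ v : V, mul v 0 = 0 ∧ mul 0 v = 0) :=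
  ⟨fun _ w hv _ => h.add_ne_zero hone hv w,
    fun a b ha hb => (h.mul_ne_zero_iff hone a b).2 ⟨ha, hb⟩,
    fun v => ⟨(h.mul_eq_zero_iff hone v 0).2 (.inr rfl), (h.mul_eq_zero_iff hone 0 v).2 (.inl rfl)⟩⟩

theorem DetectsTwoEdges.of_sum {V : Type*} [AddCommMonoid V] {mul : V → V → V}
    (h : ∀ f g : Bool → V, ∑ k, mul (f k) (g k) ≠ 0 ↔ ∃ k, f k ≠ 0 ∧ g k ≠ 0) :
    DetectsTwoEdges mul := fun a b c d => by
  simpa [or_comm] using h (fun k => bif k then a else c) (fun k => bif k then b else d)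

/-- If, for every finite edge set `K`, key sets `K₁ K₂`, arrays
`Eout`, `Ein`, and keys `x`, `y`, the entry `⊕_{k∈K} Eout(k,x) ⊗ Ein(k,y)` is
nonzero iff some `k ∈ K` has `Eout(k,x) ≠ 0` and `Ein(k,y) ≠ 0`, then (V,⊕,⊗)
satisfies (C1) no nontrivial additive inverses, (C2) the zero-product property,
and (C3) zero annihilates. -/
theorem stmt6 (V : Type*) [AddCommMonoid V]
    (mul : V → V → V) (one : V)
    (hone : ∀ v : V, mul v one = v ∧ mul one v = v)
    (h : ∀ (K : Type) [Fintype K] (K₁ K₂ : Type)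
      (Eout : K × K₁ → V) (Ein : K × K₂ → V) (x : K₁) (y : K₂),
      (∑ k : K, mul (Eout (k, x)) (Ein (k, y))) ≠ 0 ↔
        ∃ k : K, Eout (k, x) ≠ 0 ∧ Ein (k, y) ≠ 0) :
    (∀ v w : V, v ≠ 0 → w ≠ 0 → v + w ≠ 0) ∧
    (∀ a b : V, a ≠ 0 → b ≠ 0 → mul a b ≠ 0) ∧
    (∀ v : V, mul v 0 = 0 ∧ mul 0 v = 0) := by
  have two_edges : DetectsTwoEdges mul :=
    .of_sum fun f g => h Bool Unit Unit (f ∘ Prod.fst) (g ∘ Prod.fst) () ()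
  exact stmt6_general two_edges fun v => (hone v).1
end
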